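/- arXiv:2103.03298 — 2 statements merged into one kernel-verified Lean document; each statement's English description precedes it below -/
import Mathlib

section
/- Let p be a prime with p ≡ 5 (mod 6). Then there are no odd integers α, β, v with gcd(α, v) = 1 and 3 ∤ α satisfying α^{2p} − 4β^p = 21v^2. -/
open scoped NumberTheorySymbols

/-- The reciprocity computation: `J(β | m) = 1` where `α² - β = 3 * 2 ^ e * m`. -/
lemma jac_beta (α β c : ℤ) (e m : ℕ) (hα : α ^ 2 = 8 * c + 1)
    (hβ2 : β % 2 = 1) (hβ3 : β % 3 = 1) (hm : m % 2 = 1)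
    (hcop : IsCoprime α β) (hD : α ^ 2 - β = 3 * 2 ^ e * m) : J(β | m) = 1 := by
  obtain ⟨b, hb⟩ : ∃ b : ℕ, b = β.natAbs := ⟨_, rfl⟩
  have hbodd : b % 2 = 1 := by omega
  have hgcd : α.gcd b = 1 := by
    rw [hb, Int.gcd_eq_natAbs, Int.natAbs_natCast]
    exact Int.isCoprime_iff_gcd_eq_one.mp hcop
  have h1 : J(3 * 2 ^ e * m | b) = 1 := by
    rw [← hD, ← jacobiSym.sq_one' hgcd]
    apply jacobiSym.mod_left'
    apply Int.ModEq.symm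
    rw [Int.modEq_iff_dvd]
    rw [hb]
    have : α ^ 2 - β - α ^ 2 = -β := by ring
    rw [this, dvd_neg]
    exact Int.natAbs_dvd.mpr dvd_rfl
  rw [jacobiSym.mul_left, jacobiSym.mul_left, jacobiSym.pow_left] at h1
  have h3 : J(3 | b) = J(3 | b % 12) := jacobiSym.mod_right 3 (Nat.odd_iff.mpr hbodd)
  have h2 : J(2 | b) = J(2 | b % 8) := jacobiSym.mod_right 2 (Nat.odd_iff.mpr hbodd)
  have hn : J(-1 | m) = J(-1 | m % 4) := jacobiSym.mod_right (-1) (Nat.odd_iff.mpr hm)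
  have hq := jacobiSym.quadratic_reciprocity_if hbodd hm
  have v31 : J(3 | 1) = 1 := by norm_num
  have v35 : J(3 | 5) = -1 := by norm_num
  have v37 : J(3 | 7) = -1 := by norm_num
  have v311 : J(3 | 11) = 1 := by norm_num
  have v21 : J(2 | 1) = 1 := by norm_num
  have v23 : J(2 | 3) = -1 := by norm_num
  have v25 : J(2 | 5) = -1 := by norm_num
  have v27 : J(2 | 7) = 1 := by norm_num
  have vn1 : J(-1 | 1) = 1 := by norm_num
  have vn3 : J(-1 | 3) = -1 := by norm_num
  -- the value of J(2|b)^e and the link between e, β and m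
  have key : (β % 4 = 1 ∧ J(2 | b) ^ e = 1) ∨ (e = 1 ∧ β % 8 = (1 - 6 * m) % 8) := by
    rcases e with _ | _ | _ | e
    · omega
    · right; omega
    · left
      refine ⟨by omega, ?_⟩
      apply jacobiSym.sq_one
      have : Odd b := Nat.odd_iff.mpr hbodd
      exact (Nat.coprime_two_left (n := b)).mpr this
    · left
      have : (3 * 2 ^ (e + 1 + 1 + 1) * m : ℤ) = 8 * (3 * 2 ^ e * m) := by ring
      rw [this] at hD
      generalize (3 * 2 ^ e * m : ℤ) = t at hD
      have h8 : b % 8 = 1 ∨ b % 8 = 7 := by omega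
      refine ⟨by omega, ?_⟩
      rw [h2]
      rcases h8 with h | h <;> rw [h] <;> simp [v21, v27]
  rcases le_or_gt 0 β with hs | hs
  · have hβb : β = b := by omega
    rw [hβb, ← hq]
    rcases key with ⟨h4, he⟩ | ⟨rfl, h8⟩
    · have : b % 12 = 1 := by omega
      rw [this] at h3
      rw [he, h3, v31] at h1
      rw [if_neg (by omega)]
      simpa using h1
    · rw [pow_one] at h1
      have hc : (b % 8 = 3 ∧ m % 4 = 1) ∨ (b % 8 = 7 ∧ m % 4 = 3) ∨ (b % 8 = 1 ∨ b % 8 = 5) := by omega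
      rcases hc with ⟨h, h'⟩ | ⟨h, h'⟩ | h
      · have : b % 12 = 7 := by omega
        rw [h3, h2, this, h, v37, v23] at h1
        rw [if_neg (by omega)]
        simpa using h1
      · have : b % 12 = 7 := by omega
        rw [h3, h2, this, h, v37, v27] at h1
        rw [if_pos (by omega)]
        linarith
      · omega
  · have hβb : β = -1 * b := by omega
    rw [hβb, jacobiSym.mul_left, ← hq, hn]
    rcases key with ⟨h4, he⟩ | ⟨rfl, h8⟩
    · have : b % 12 = 11 := by omega
      rw [this] at h3
      rw [he, h3, v311] at h1
      have hm4 : m % 4 = 1 ∨ m % 4 = 3 := by omega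
      rcases hm4 with h | h
      · rw [if_neg (by omega), h, vn1]; linarith
      · rw [if_pos (by omega), h, vn3]; linarith
    · rw [pow_one] at h1
      have hc : (b % 8 = 5 ∧ m % 4 = 1) ∨ (b % 8 = 1 ∧ m % 4 = 3) := by omega
      have : b % 12 = 5 := by omega
      rcases hc with ⟨h, h'⟩ | ⟨h, h'⟩
      · rw [h3, h2, this, h, v35, v25] at h1
        rw [if_neg (by omega), h', vn1]; linarith
      · rw [h3, h2, this, h, v35, v21] at h1
        rw [if_neg (by omega), h', vn3]; linarith

/-- The computation `J(-7 | m) = -1`. -/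
lemma jac_seven (α β : ℤ) (e m : ℕ) (hm : m % 2 = 1) (h7 : ¬ (7 : ℤ) ∣ α)
    (hβ : (7 : ℤ) ∣ β - 4 * α ^ 2) (hD : α ^ 2 - β = 3 * 2 ^ e * m) : J(-7 | m) = -1 := by
  have hg : (2 * α).gcd (7 : ℕ) = 1 := by
    rw [← Int.isCoprime_iff_gcd_eq_one]
    have hp7 : Prime (7 : ℤ) := by norm_num
    refine ((hp7.coprime_iff_not_dvd).mpr ?_).symm
    intro h
    rcases hp7.dvd_or_dvd h with h | h
    · norm_num at h
    · exact h7 h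
  have h1 : J(3 * 2 ^ e * m | 7) = 1 := by
    rw [← hD, ← jacobiSym.sq_one' hg]
    apply jacobiSym.mod_left'
    obtain ⟨k, hk⟩ := hβ
    have : (2 * α) ^ 2 = 4 * α ^ 2 := by ring
    rw [this]
    push_cast
    omega
  rw [jacobiSym.mul_left, jacobiSym.mul_left, jacobiSym.pow_left] at h1
  have v3 : J(3 | 7) = -1 := by norm_num
  have v2 : J(2 | 7) = 1 := by norm_num
  rw [v3, v2, one_pow] at h1
  have hq := jacobiSym.quadratic_reciprocity_if (a := 7) (b := m) (by norm_num) hm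
  have hn : J(-1 | m) = J(-1 | m % 4) := jacobiSym.mod_right (-1) (Nat.odd_iff.mpr hm)
  have : (-7 : ℤ) = -1 * (7 : ℕ) := by norm_num
  rw [this, jacobiSym.mul_left, ← hq, hn]
  have hm4 : m % 4 = 1 ∨ m % 4 = 3 := by omega
  rcases hm4 with h | h
  · rw [if_neg (by omega), h]
    have vn1 : J(-1 | 1) = 1 := by norm_num
    rw [vn1]; linarith
  · rw [if_pos (by omega), h]
    have vn3 : J(-1 | 3) = -1 := by norm_num
    rw [vn3]; linarith

lemma pow_seven (x : ZMod 7) (k : ℕ) : x ^ (6 * k + 5) = x ^ 5 := by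
  have h11 : ∀ y : ZMod 7, y ^ 6 * y ^ 5 = y ^ 5 := by decide
  induction k with
  | zero => rfl
  | succ k ih =>
    have : x ^ (6 * (k + 1) + 5) = x ^ 6 * x ^ (6 * k + 5) := by ring
    rw [this, ih, h11]

theorem no_solutions_BS1_p_5_mod_6
    (p : ℕ) (hp : p.Prime) (hcong : p % 6 = 5) :
    ¬ ∃ α β v : ℤ, Odd α ∧ Odd β ∧ Odd v ∧ Int.gcd α v = 1 ∧ ¬ (3 : ℤ) ∣ α ∧
      α ^ (2 * p) - 4 * β ^ p = 21 * v ^ 2 := by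
  rintro ⟨α, β, v, hα, hβ, hv, hgcd, h3, heq⟩
  obtain ⟨k, rfl⟩ : ∃ k, p = 6 * k + 5 := ⟨p / 6, by omega⟩
  have hodd : Odd (6 * k + 5) := ⟨3 * k + 2, by ring⟩
  have hαv : IsCoprime α v := Int.isCoprime_iff_gcd_eq_one.mpr hgcd
  -- α, β coprime
  have hcop : IsCoprime α β := by
    rw [Int.isCoprime_iff_gcd_eq_one]
    by_contra hne
    obtain ⟨q, hq, hqd⟩ := Nat.exists_prime_and_dvd hne
    have hqα : (q : ℤ) ∣ α := (Int.natCast_dvd_natCast.mpr hqd).trans (Int.gcd_dvd_left _ _)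
    have hqβ : (q : ℤ) ∣ β := (Int.natCast_dvd_natCast.mpr hqd).trans (Int.gcd_dvd_right _ _)
    have hqp : Prime (q : ℤ) := Nat.prime_iff_prime_int.mp hq
    have hq2 : (q : ℤ) ^ 2 ∣ 21 * v ^ 2 := by
      rw [← heq]
      refine dvd_sub ?_ (Dvd.dvd.mul_left ?_ _)
      · exact (pow_dvd_pow_of_dvd hqα 2).trans (pow_dvd_pow _ (by omega))
      · exact (pow_dvd_pow_of_dvd hqβ 2).trans (pow_dvd_pow _ (by omega))
    have hc : IsCoprime ((q : ℤ) ^ 2) (v ^ 2) := (hαv.of_isCoprime_of_dvd_left hqα).pow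
    have h21 : (q : ℤ) ^ 2 ∣ 21 := hc.dvd_of_dvd_mul_right hq2
    have h21' : q ^ 2 ∣ 21 := by exact_mod_cast h21
    have hle := Nat.le_of_dvd (by norm_num) h21'
    have : q ≤ 4 := by nlinarith
    have := hq.two_le
    interval_cases q <;> omega
  -- mod 7
  have h7 : ((α : ZMod 7)) ^ 10 = 4 * (β : ZMod 7) ^ 5 := by
    have h := congrArg (Int.cast : ℤ → ZMod 7) heq
    push_cast at h
    have h21 : (21 : ZMod 7) = 0 := by decide
    rw [h21, zero_mul, pow_mul, pow_seven, pow_seven, ← pow_mul] at h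
    exact sub_eq_zero.mp h
  have hβ7 : (7 : ℤ) ∣ β - 4 * α ^ 2 := by
    have hd : ∀ a b : ZMod 7, a ^ 10 = 4 * b ^ 5 → b - 4 * a ^ 2 = 0 := by decide
    have := hd _ _ h7
    exact (ZMod.intCast_zmod_eq_zero_iff_dvd _ 7).mp (by push_cast; exact this)
  have hα7 : ¬ (7 : ℤ) ∣ α := by
    intro h
    have h' : (7 : ℤ) ∣ β := by
      have := dvd_add hβ7 (Dvd.dvd.mul_left (dvd_pow h two_ne_zero) 4)
      simpa using this
    have := hcop.isUnit_of_dvd' h h'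
    rw [Int.isUnit_iff] at this
    omega
  -- mod 3
  have hβ3 : β % 3 = 1 := by
    have h := congrArg (Int.cast : ℤ → ZMod 3) heq
    push_cast at h
    have ha : (α : ZMod 3) ≠ 0 := by
      rw [Ne, ZMod.intCast_zmod_eq_zero_iff_dvd]; exact h3
    have e1 : ∀ a : ZMod 3, a ≠ 0 → a ^ 2 = 1 := by decide
    have e2 : ∀ b : ZMod 3, b ^ 2 * b = b := by decide
    have e3 : (β : ZMod 3) ^ (6 * k + 5) = β := by
      have : ∀ n : ℕ, (β : ZMod 3) ^ (2 * n + 1) = β := by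
        intro n
        induction n with
        | zero => simp
        | succ n ih =>
          have : (β : ZMod 3) ^ (2 * (n + 1) + 1) = β ^ 2 * β ^ (2 * n + 1) := by ring
          rw [this, ih, e2]
      have h' := this (3 * k + 2)
      rwa [show 2 * (3 * k + 2) + 1 = 6 * k + 5 by ring] at h'
    rw [pow_mul, e1 _ ha, one_pow, e3] at h
    have e4 : ∀ b w : ZMod 3, 1 - 4 * b = 21 * w → b - 1 = 0 := by decide
    have h5 := e4 _ _ h
    have : (3 : ℤ) ∣ β - 1 :=
      (ZMod.intCast_zmod_eq_zero_iff_dvd _ 3).mp (by push_cast; exact h5)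
    omega
  have hβ2 : β % 2 = 1 := Int.odd_iff.mp hβ
  obtain ⟨c, hc⟩ : ∃ c, α ^ 2 = 8 * c + 1 := by
    have := Int.eight_dvd_sq_sub_one_of_odd hα
    obtain ⟨c, hc⟩ := this
    exact ⟨c, by linarith⟩
  have hα3 : α ^ 2 % 3 = 1 := by
    have : α % 3 = 1 ∨ α % 3 = 2 := by omega
    rcases this with h | h <;> simp [pow_two, Int.mul_emod, h]
  -- positivity
  have hpos : 0 < α ^ 2 - β := by
    by_contra hle
    have hle : α ^ 2 ≤ β := by linarith
    have hα0 : 0 < α ^ 2 := by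
      have : α ≠ 0 := by rintro rfl; simp at h3
      positivity
    have hpw : (α ^ 2) ^ (6 * k + 5) ≤ β ^ (6 * k + 5) := pow_le_pow_left₀ hα0.le hle _
    rw [← pow_mul] at hpw
    have : 0 < β ^ (6 * k + 5) := pow_pos (by linarith) _
    nlinarith [sq_nonneg v]
  obtain ⟨n, hn⟩ : ∃ n : ℕ, α ^ 2 - β = 3 * n := ⟨((α ^ 2 - β) / 3).toNat, by omega⟩
  have hn0 : n ≠ 0 := by rintro rfl; simp at hn; omega
  obtain ⟨e, m, hm, rfl⟩ := Nat.exists_eq_two_pow_mul_odd hn0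
  have hm2 : m % 2 = 1 := Nat.odd_iff.mp hm
  have hD : α ^ 2 - β = 3 * 2 ^ e * m := by rw [hn]; push_cast; ring
  have hJβ := jac_beta α β c e m hc hβ2 hβ3 hm2 hcop hD
  have hJ7 := jac_seven α β e m hm2 hα7 hβ7 hD
  -- the congruence 7 v² ≡ -β^p mod m
  obtain ⟨S, hS⟩ := sub_dvd_pow_sub_pow (α ^ 2) β (6 * k + 5)
  have hcongr : (-7 * β) * β ^ (6 * k + 4) - (7 * v) ^ 2 = m * (-7 * 2 ^ e * S) := by
    rw [← pow_mul, hD] at hS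
    have hpw : β ^ (6 * k + 5) = β * β ^ (6 * k + 4) := by ring
    rw [hpw] at hS heq
    have : 3 * ((-7 * β) * β ^ (6 * k + 4) - (7 * v) ^ 2) = 3 * (m * (-7 * 2 ^ e * S)) := by
      linear_combination 7 * heq - 7 * hS
    linarith
  have hJ : J((-7 * β) * β ^ (6 * k + 4) | m) = J((7 * v) ^ 2 | m) := by
    apply jacobiSym.mod_left'
    apply Int.ModEq.symm
    rw [Int.modEq_iff_dvd, hcongr]
    exact dvd_mul_right _ _
  rw [jacobiSym.mul_left, jacobiSym.mul_left, jacobiSym.pow_left, jacobiSym.pow_left,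
    hJβ, hJ7, one_pow] at hJ
  nlinarith [sq_nonneg J(7 * v | m)]
end

section
/- The Diophantine equation α^{38} − 4β^{19} = 21v^2 has no solutions in odd, pairwise coprime integers α, β, v. -/
/-- Signed quadratic reciprocity when one argument is `1` mod `4` and they are not both negative. -/
lemma bs_recip (m n : ℤ) (hm : m % 2 = 1) (hn : n % 2 = 1) (h4 : m % 4 = 1 ∨ n % 4 = 1)
    (hs : ¬ (m < 0 ∧ n < 0)) : jacobiSym m n.natAbs = jacobiSym n m.natAbs := by
  have key : ∀ k l : ℕ, k % 2 = 1 → l % 2 = 1 → ((k : ℤ) % 4 = 1 ∨ (l : ℤ) % 4 = 1) →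
      jacobiSym (k : ℤ) l = jacobiSym (l : ℤ) k := by
    intro k l hk hl h
    rcases h with h | h
    · exact jacobiSym.quadratic_reciprocity_one_mod_four (by omega) (Nat.odd_iff.mpr hl)
    · exact (jacobiSym.quadratic_reciprocity_one_mod_four (by omega) (Nat.odd_iff.mpr hk)).symm
  have key2 : ∀ k l : ℕ, k % 2 = 1 → l % 2 = 1 → ((-(k : ℤ)) % 4 = 1 ∨ (l : ℤ) % 4 = 1) →
      jacobiSym (-(k : ℤ)) l = jacobiSym (l : ℤ) k := by
    intro k l hk hl h
    rw [jacobiSym.neg _ (Nat.odd_iff.mpr hl)]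
    by_cases h1 : l % 4 = 1
    · rw [ZMod.χ₄_nat_one_mod_four h1, one_mul]
      exact key k l hk hl (Or.inr (by omega))
    · have h3 : l % 4 = 3 := by omega
      have h4 : k % 4 = 3 := by omega
      rw [ZMod.χ₄_nat_three_mod_four h3, jacobiSym.quadratic_reciprocity_three_mod_four h4 h3]
      ring
  rcases Int.natAbs_eq m with e | e <;> rcases Int.natAbs_eq n with f | f
  · have := key m.natAbs n.natAbs (by omega) (by omega) (by omega)
    rw [← e, ← f] at this
    exact this
  · have := key2 n.natAbs m.natAbs (by omega) (by omega) (by omega)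
    rw [← e, ← f] at this
    exact this.symm
  · have := key2 m.natAbs n.natAbs (by omega) (by omega) (by omega)
    rw [← e, ← f] at this
    exact this
  · exfalso
    omega

lemma bs_cop_of_prime (x y : ℤ) (h : ∀ q : ℕ, q.Prime → (q : ℤ) ∣ x → (q : ℤ) ∣ y → False) :
    Int.gcd x y = 1 := by
  by_contra hne
  obtain ⟨q, hq, hd⟩ := Nat.exists_prime_and_dvd hne
  exact h q hq ((Int.natCast_dvd_natCast.mpr hd).trans (Int.gcd_dvd_left ..))
    ((Int.natCast_dvd_natCast.mpr hd).trans (Int.gcd_dvd_right ..))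

lemma bs_sq (x n : ℤ) (h : IsCoprime x n) : jacobiSym (x ^ 2) n.natAbs = 1 := by
  apply jacobiSym.sq_one'
  have := Int.isCoprime_iff_gcd_eq_one.mp h
  exact this

lemma bs_congr (x y n : ℤ) (h : n ∣ x - y) : jacobiSym x n.natAbs = jacobiSym y n.natAbs := by
  apply jacobiSym.mod_left'
  apply Int.ModEq.symm
  apply (Int.modEq_iff_dvd).mpr
  exact Int.natAbs_dvd.mpr h

lemma bs_chi (n : ℤ) :
    (((n.natAbs : ℕ) : ℤ) % 4 = 1 → jacobiSym (-1) n.natAbs = 1) ∧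
    (((n.natAbs : ℕ) : ℤ) % 4 = 3 → jacobiSym (-1) n.natAbs = -1) := by
  constructor <;> intro h
  · rw [jacobiSym.at_neg_one (Nat.odd_iff.mpr (by omega)), ZMod.χ₄_nat_one_mod_four (by omega)]
  · rw [jacobiSym.at_neg_one (Nat.odd_iff.mpr (by omega)), ZMod.χ₄_nat_three_mod_four (by omega)]

lemma bs_mul_right (x n k : ℤ) (hn : n ≠ 0) (hk : k ≠ 0) :
    jacobiSym x (n * k).natAbs = jacobiSym x n.natAbs * jacobiSym x k.natAbs := by
  rw [Int.natAbs_mul]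
  exact jacobiSym.mul_right' x (by omega) (by omega)

lemma bs_cop (x y : ℤ) (h : ∀ q : ℕ, Prime (q : ℤ) → (q : ℤ) ∣ x → (q : ℤ) ∣ y → False) :
    IsCoprime x y :=
  Int.isCoprime_iff_gcd_eq_one.mpr
    (bs_cop_of_prime x y fun q hq => h q (Nat.prime_iff_prime_int.mp hq))

/-- A common prime divisor contradicts coprimality. -/
lemma bs_not (x y q : ℤ) (h : IsCoprime x y) (hq : Prime q) (hx : q ∣ x) (hy : q ∣ y) : False :=
  hq.not_isUnit (h.isUnit_of_dvd' hx hy)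

/-- The symbol of `P1` over `h` equals one. -/
lemma bs_P1 (a b h m : ℤ) (ha : a % 8 = 1) (ha0 : 0 < a) (hb : b % 2 = 1) (hab : IsCoprime a b)
    (hH : m ^ 2 * h = (a ^ 2 - b ^ 2) ^ 2 - a * b ^ 3)
    (hm : IsCoprime m (a ^ 2 + a * b - b ^ 2))
    (hba : b < a) (hh0 : b < 0 → 0 < h) (hh : (h + b) % 4 = 0) :
    jacobiSym (a ^ 2 + a * b - b ^ 2) h.natAbs = 1 := by
  obtain ⟨P, hP⟩ : ∃ P, P = a ^ 2 + a * b - b ^ 2 := ⟨_, rfl⟩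
  obtain ⟨V, hV⟩ : ∃ V, V = b - 2 * a := ⟨_, rfl⟩
  rw [← hP] at hm ⊢
  have hb4 : b % 4 = 1 ∨ b % 4 = 3 := by omega
  have ha4 : a % 4 = 1 := by omega
  have hP4 : P % 4 = b % 4 := by
    rcases hb4 with e | e <;>
    simp [hP, pow_two, Int.add_emod, Int.sub_emod, Int.mul_emod, e, ha4]
  have hbP : IsCoprime b P := by
    have : P = a ^ 2 + b * (a - b) := by rw [hP]; ring
    rw [this]
    exact IsCoprime.add_mul_left_right (hab.symm.pow_right) _
  have hVodd : V % 2 = 1 := by omega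
  have hbV : IsCoprime b V := by
    apply bs_cop
    intro q hq h1 h2
    have h3 : (q : ℤ) ∣ 2 * a := by
      have := dvd_sub h1 h2
      rwa [hV, sub_sub_cancel] at this
    rcases hq.dvd_or_dvd h3 with h4 | h4
    · have := (dvd_sub h1 (h4.mul_right (b / 2)))
      rw [show b - 2 * (b / 2) = 1 by omega] at this
      exact hq.not_isUnit (isUnit_of_dvd_one this)
    · exact bs_not a b q hab hq h4 h1
  have h2V : IsCoprime 2 V := ⟨-(V / 2), 1, by omega⟩
  have hV0 : V < 0 := by omega
  have hb0 : b ≠ 0 := by omega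
  have hVb0 : b * V ≠ 0 := mul_ne_zero hb0 hV0.ne
  have s1 : jacobiSym P h.natAbs = jacobiSym h P.natAbs := by
    apply bs_recip
    · omega
    · omega
    · omega
    · rintro ⟨h1, h2⟩
      have : ¬ b < 0 := fun hb => by have := hh0 hb; omega
      have : 0 < b := by omega
      nlinarith
  have s2 : jacobiSym h P.natAbs = jacobiSym (b * V) P.natAbs := by
    have e1 : jacobiSym (m ^ 2 * h) P.natAbs = jacobiSym (b ^ 2 * (b * V)) P.natAbs := by
      apply bs_congr
      exact ⟨a ^ 2 - a * b, by rw [hH, hV, hP]; ring⟩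
    rw [jacobiSym.mul_left, jacobiSym.mul_left, bs_sq _ _ hm, bs_sq _ _ hbP] at e1
    simpa using e1
  have s3 : jacobiSym P (b * V).natAbs = jacobiSym (-1) V.natAbs := by
    rw [bs_mul_right _ _ _ hb0 hV0.ne]
    have e1 : jacobiSym P b.natAbs = 1 := by
      rw [← bs_sq a b hab]
      apply bs_congr
      exact ⟨a - b, by rw [hP]; ring⟩
    have e2 : jacobiSym (2 ^ 2 * P) V.natAbs = jacobiSym (-1 * b ^ 2) V.natAbs := by
      apply bs_congr
      exact ⟨-3 * b - 2 * a, by rw [hP, hV]; ring⟩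
    rw [jacobiSym.mul_left, jacobiSym.mul_left, bs_sq _ _ h2V, bs_sq _ _ hbV] at e2
    rw [e1]
    simpa using e2
  have hn4 : (b * V) % 4 = 3 := by
    rcases hb4 with e | e <;>
    simp [hV, Int.sub_emod, Int.mul_emod, e, ha4]
  have s4 : jacobiSym (-(b * V)) P.natAbs = jacobiSym (-1) P.natAbs * jacobiSym (b * V) P.natAbs := by
    rw [← jacobiSym.mul_left]; congr 1; ring
  obtain ⟨c1, c3⟩ := bs_chi V
  obtain ⟨d1, d3⟩ := bs_chi P
  rw [s1, s2]
  rcases lt_or_ge P 0 with hneg | hpos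
  · have hbneg : b < 0 := by
      by_contra hcon
      have : 0 < b := by omega
      nlinarith
    have hn0 : 0 < b * V := mul_pos_of_neg_of_neg hbneg hV0
    have s5 := bs_recip (-(b * V)) (-P) (by omega) (by omega) (by omega) (by omega)
    rw [Int.natAbs_neg, Int.natAbs_neg, s4] at s5
    have s6 : jacobiSym (-P) (b * V).natAbs =
        jacobiSym (-1) (b * V).natAbs * jacobiSym P (b * V).natAbs := by
      rw [← jacobiSym.mul_left]; congr 1; ring
    rw [s6, (bs_chi (b * V)).2 (by omega), s3] at s5
    rcases hb4 with e | e
    · rw [c1 (by omega), d3 (by omega)] at s5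
      linarith
    · rw [c3 (by omega), d1 (by omega)] at s5
      linarith
  · have s5 := bs_recip (-(b * V)) P (by omega) (by omega) (by omega) (by omega)
    rw [Int.natAbs_neg, s4, s3] at s5
    rcases hb4 with e | e
    · rw [c1 (by omega), d1 (by omega)] at s5
      linarith
    · rw [c3 (by omega), d3 (by omega)] at s5
      linarith

/-- The symbol of `p` over `h` equals one. -/
lemma bs_P2 (a b h m c p w : ℤ) (hb : b % 2 = 1) (hab : IsCoprime a b)
    (hP : m ^ 2 * p = 4 * a ^ 2 + 6 * a * b + 3 * b ^ 2)
    (hH : 8 * h = p * (2 * a ^ 2 - 3 * a * b - b ^ 2) + b ^ 3 * w)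
    (hW : m ^ 2 * w = 7 * a + 11 * b)
    (hR : 49 * p = w * (28 * a - 2 * b) + c ^ 2 * b ^ 2)
    (hmb : IsCoprime m b) (hwc : IsCoprime w c) (hw7 : IsCoprime w 7)
    (hp0 : 0 < p) (hp8 : p % 8 = (7 + 6 * b) % 8) (hw8 : w % 8 = (7 + 3 * b) % 8)
    (hh : (h + b) % 4 = 0) :
    jacobiSym p h.natAbs = 1 := by
  have h2b : IsCoprime 2 b := ⟨-(b / 2), 1, by omega⟩
  have hwb : IsCoprime w b := by
    apply bs_cop
    intro q hq h1 h2
    have h3 : (q : ℤ) ∣ 7 * a := by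
      have e : 7 * a = m ^ 2 * w - 11 * b := by rw [hW]; ring
      rw [e]; exact dvd_sub (h1.mul_left _) (h2.mul_left _)
    rcases hq.dvd_or_dvd h3 with h4 | h4
    · exact bs_not _ _ q hw7 hq h1 h4
    · exact bs_not _ _ q hab hq h4 h2
  have hbp : IsCoprime b p := by
    apply bs_cop
    intro q hq h1 h2
    have h3 : (q : ℤ) ∣ 2 ^ 2 * a ^ 2 := by
      have e : 2 ^ 2 * a ^ 2 = m ^ 2 * p - b * (6 * a + 3 * b) := by rw [hP]; ring
      rw [e]; exact dvd_sub (h2.mul_left _) (h1.mul_right _)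
    rcases hq.dvd_or_dvd h3 with h4 | h4
    · exact bs_not _ _ q h2b hq (hq.dvd_of_dvd_pow h4) h1
    · exact bs_not _ _ q hab hq (hq.dvd_of_dvd_pow h4) h1
  have hpo : p % 2 = 1 := by omega
  have hp4 : p % 4 = 1 := by omega
  have h2p : IsCoprime 2 p := ⟨-(p / 2), 1, by omega⟩
  have s1 : jacobiSym p h.natAbs = jacobiSym h p.natAbs :=
    bs_recip _ _ hpo (by omega) (Or.inl hp4) (by omega)
  have s2 : jacobiSym 2 p.natAbs * jacobiSym h p.natAbs =
      jacobiSym b p.natAbs * jacobiSym w p.natAbs := by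
    have e1 : jacobiSym (2 ^ 2 * (2 * h)) p.natAbs = jacobiSym (b ^ 2 * (b * w)) p.natAbs := by
      apply bs_congr
      exact ⟨2 * a ^ 2 - 3 * a * b - b ^ 2, by linear_combination hH⟩
    rw [jacobiSym.mul_left, jacobiSym.mul_left _ (b * w), bs_sq _ _ h2p, bs_sq _ _ hbp] at e1
    simpa [jacobiSym.mul_left] using e1
  have s3 : jacobiSym b p.natAbs = 1 := by
    rw [bs_recip b p hb hpo (Or.inr hp4) (by omega)]
    have e1 : jacobiSym (m ^ 2 * p) b.natAbs = jacobiSym (2 ^ 2 * a ^ 2) b.natAbs := by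
      apply bs_congr
      exact ⟨6 * a + 3 * b, by rw [hP]; ring⟩
    rw [jacobiSym.mul_left, jacobiSym.mul_left, bs_sq _ _ hmb, bs_sq _ _ hab, bs_sq _ _ h2b] at e1
    simpa using e1
  have key : ∀ w' : ℤ, w' ∣ w → w' % 2 = 1 → jacobiSym w' p.natAbs = 1 := by
    intro w' hd ho
    rw [bs_recip w' p ho hpo (Or.inr hp4) (by omega)]
    have e1 : jacobiSym (7 ^ 2 * p) w'.natAbs = jacobiSym (c ^ 2 * b ^ 2) w'.natAbs := by
      apply bs_congr
      have : (7 ^ 2 * p - c ^ 2 * b ^ 2) = w * (28 * a - 2 * b) := by linear_combination hR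
      rw [this]; exact hd.mul_right _
    rw [jacobiSym.mul_left, jacobiSym.mul_left, bs_sq _ _ (hw7.of_isCoprime_of_dvd_left hd).symm,
      bs_sq _ _ (hwc.of_isCoprime_of_dvd_left hd).symm,
      bs_sq _ _ (hwb.of_isCoprime_of_dvd_left hd).symm] at e1
    simpa using e1
  have s2sq : jacobiSym 2 p.natAbs = 1 ∨ jacobiSym 2 p.natAbs = -1 := by
    apply jacobiSym.eq_one_or_neg_one
    have := Int.isCoprime_iff_gcd_eq_one.mp h2p
    exact this
  rw [s1]
  by_cases hb4 : b % 4 = 1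
  · obtain ⟨w', hw'⟩ : ∃ w', w = 2 * w' := ⟨w / 2, by omega⟩
    have k1 := key w' ⟨2, by rw [hw']; ring⟩ (by omega)
    rw [s3, hw', jacobiSym.mul_left, k1] at s2
    rcases s2sq with e | e <;> rw [e] at s2 <;> linarith
  · have hp1 : p % 8 = 1 := by omega
    have t2 : jacobiSym 2 p.natAbs = 1 := by
      rw [jacobiSym.at_two (Nat.odd_iff.mpr (by omega)), ZMod.χ₈_nat_eq_if_mod_eight]
      rw [if_neg (by omega), if_pos (by omega)]
    have hw0 : w ≠ 0 := by
      rintro rfl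
      have h1 : (7 : ℤ) ∣ 0 := dvd_zero _
      have := isCoprime_zero_left.mp hw7
      exact absurd (Int.isUnit_iff.mp this) (by norm_num)
    have fin : FiniteMultiplicity (2 : ℤ) w :=
      Int.finiteMultiplicity_iff.mpr ⟨by norm_num, hw0⟩
    obtain ⟨w', hw', hnd⟩ := fin.exists_eq_pow_mul_and_not_dvd
    have k1 := key w' ⟨_, by rw [hw'.trans (mul_comm _ _)]⟩ (by omega)
    rw [s3, hw', jacobiSym.mul_left, k1, jacobiSym.pow_left, t2] at s2
    simpa using s2

lemma bs_21 (a b : ℤ) (ha3 : a % 3 = 1) (hb3 : b % 3 = 1) (ha7 : a % 7 = (4 * b) % 7)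
    (hb7 : b % 7 = 1 ∨ b % 7 = 2 ∨ b % 7 = 4) :
    b % 21 = 1 ∧ a % 21 = 4 ∨ b % 21 = 16 ∧ a % 21 = 1 ∨ b % 21 = 4 ∧ a % 21 = 16 := by
  rcases hb7 with f | f | f
  · left
    have : a % 7 = 4 := by rw [ha7, Int.mul_emod, f]; norm_num
    clear ha7
    constructor <;> omega
  · right; left
    have : a % 7 = 1 := by rw [ha7, Int.mul_emod, f]; norm_num
    clear ha7
    constructor <;> omega
  · right; right
    have : a % 7 = 2 := by rw [ha7, Int.mul_emod, f]; norm_num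
    clear ha7
    constructor <;> omega

lemma bs_Gmod (a b r s n : ℤ) (ha : a ≡ r [ZMOD n]) (hb : b ≡ s [ZMOD n]) :
    (a ^ 10 + 2 * a ^ 2 * b ^ 8 - 2 * b ^ 10) % n =
      (r ^ 10 + 2 * r ^ 2 * s ^ 8 - 2 * s ^ 10) % n :=
  ((ha.pow 10).add (((ha.pow 2).mul_left 2).mul (hb.pow 8))).sub ((hb.pow 10).mul_left 2)

set_option maxHeartbeats 1000000 in
/-- The symbol of `h` over `g` equals one, while reciprocity forces it to be minus one. -/
lemma bs_core (α a b v m c h g p w U : ℤ) (haα : a = α ^ 2) (ha : a % 8 = 1) (ha0 : 0 < a)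
    (hb : b % 2 = 1) (hab : IsCoprime a b) (hm : m = 1 ∨ m = 13)
    (ha3 : a % 3 = 1) (hb3 : b % 3 = 1) (ha7 : a % 7 = (4 * b) % 7)
    (hb7 : b % 7 = 1 ∨ b % 7 = 2 ∨ b % 7 = 4) (hba : b < a)
    (hH : m ^ 2 * h = (a ^ 2 - b ^ 2) ^ 2 - a * b ^ 3)
    (hG : m ^ 2 * g = a ^ 10 + 2 * a ^ 2 * b ^ 8 - 2 * b ^ 10)
    (hP : m ^ 2 * p = 4 * a ^ 2 + 6 * a * b + 3 * b ^ 2)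
    (hW : m ^ 2 * w = 7 * a + 11 * b)
    (R1 : 21 * v ^ 2 * h = (α * U) ^ 2 - b ^ 3 * g ^ 2)
    (R2 : g = b ^ 6 * (a ^ 2 + a * b - b ^ 2) * p + h * (a ^ 6 + 2 * a ^ 4 * b ^ 2 + a ^ 3 * b ^ 3
      + 3 * a ^ 2 * b ^ 4 + 4 * a * b ^ 5 + b ^ 6))
    (R3 : 8 * h = p * (2 * a ^ 2 - 3 * a * b - b ^ 2) + b ^ 3 * w)
    (R4 : 49 * p = w * (28 * a - 2 * b) + c ^ 2 * b ^ 2)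
    (R6 : a * (U - a * g) + b ^ 2 * g = - 2 * b ^ 8 * h)
    (hmb : IsCoprime m b) (hmP : IsCoprime m (a ^ 2 + a * b - b ^ 2)) (hwc : IsCoprime w c) :
    False := by
  have hm0 : (0 : ℤ) < m ^ 2 := by rcases hm with rfl | rfl <;> norm_num
  have mod8 : ∀ x, (m ^ 2 * x) % 8 = x % 8 := by
    intro x; rcases hm with rfl | rfl <;> norm_num <;> omega
  have mod21 : ∀ x, (m ^ 2 * x) % 21 = x % 21 := by
    intro x; rcases hm with rfl | rfl <;> norm_num <;> omega
  have hb8 : b % 8 = 1 ∨ b % 8 = 3 ∨ b % 8 = 5 ∨ b % 8 = 7 := by omega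
  have hh8 : (h + b) % 4 = 0 := by
    have e := mod8 h
    rw [hH] at e
    have : ((a ^ 2 - b ^ 2) ^ 2 - a * b ^ 3 + b) % 8 = 0 := by
      rcases hb8 with f | f | f | f <;>
      simp [pow_succ, Int.sub_emod, Int.add_emod, Int.mul_emod, f, ha]
    omega
  have hg8 : g % 8 = 1 := by
    rw [← mod8 g, hG]
    rcases hb8 with f | f | f | f
    · exact bs_Gmod a b 1 1 8 ha f
    · exact bs_Gmod a b 1 3 8 ha f
    · exact bs_Gmod a b 1 5 8 ha f
    · exact bs_Gmod a b 1 7 8 ha f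
  have hp8 : p % 8 = (7 + 6 * b) % 8 := by
    rw [← mod8 p, hP]
    rcases hb8 with f | f | f | f <;>
      simp [pow_succ, Int.add_emod, Int.mul_emod, f, ha]
  have hw8 : w % 8 = (7 + 3 * b) % 8 := by
    rw [← mod8 w, hW]
    omega
  have hg21 : g % 21 = 13 ∨ g % 21 = 19 ∨ g % 21 = 10 := by
    rw [← mod21 g, hG]
    have hb21 : b % 21 = 1 ∧ a % 21 = 4 ∨ b % 21 = 16 ∧ a % 21 = 1 ∨ b % 21 = 4 ∧ a % 21 = 16 :=
      bs_21 a b ha3 hb3 ha7 hb7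
    rcases hb21 with ⟨f, k⟩ | ⟨f, k⟩ | ⟨f, k⟩
    · rw [bs_Gmod a b 4 1 21 k f]; norm_num
    · rw [bs_Gmod a b 1 16 21 k f]; norm_num
    · rw [bs_Gmod a b 16 4 21 k f]; norm_num
  have hJ : jacobiSym g 21 = -1 := by
    rw [jacobiSym.mod_left]
    rcases hg21 with f | f | f <;> norm_num [f]
  have nb7 : ¬ (7 : ℤ) ∣ b := by
    clear hg21 ha7 ha3 hb3 hb8
    rcases hb7 with f | f | f <;> omega
  clear hg21 ha7 ha3 hb3 hb7 hb8
  have hp0 : 0 < p := by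
    have : 0 < m ^ 2 * p := by
      rw [hP]
      have hb0 : b ≠ 0 := by omega
      have e : 4 * (4 * a ^ 2 + 6 * a * b + 3 * b ^ 2) = (4 * a + 3 * b) ^ 2 + 3 * b ^ 2 := by ring
      have e2 : 0 < (4 * a + 3 * b) ^ 2 + 3 * b ^ 2 := by positivity
      omega
    exact (mul_pos_iff_of_pos_left hm0).mp this
  have hh0 : b < 0 → 0 < h := by
    intro hneg
    have : 0 < m ^ 2 * h := by
      rw [hH]
      have h1 : b ^ 3 < 0 := Odd.pow_neg (by decide) hneg
      have h2 := sq_nonneg (a ^ 2 - b ^ 2)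
      have h3 := mul_neg_of_pos_of_neg ha0 h1
      omega
    exact (mul_pos_iff_of_pos_left hm0).mp this
  have hg0 : 0 < b → 0 < g := by
    intro hpos
    have : 0 < m ^ 2 * g := by
      rw [hG]
      have h1 : 0 < b ^ 8 := by positivity
      have h2 : 0 < a ^ 10 := by positivity
      have h3 : b ^ 2 ≤ a ^ 2 := pow_le_pow_left₀ hpos.le hba.le 2
      have h4 := mul_le_mul_of_nonneg_right h3 h1.le
      have e : a ^ 10 + 2 * a ^ 2 * b ^ 8 - 2 * b ^ 10 =
        a ^ 10 + 2 * (a ^ 2 * b ^ 8 - b ^ 2 * b ^ 8) := by ring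
      rw [e]
      omega
    exact (mul_pos_iff_of_pos_left hm0).mp this
  have p7 : Prime (7 : ℤ) := by norm_num
  have hw7 : IsCoprime w 7 := by
    apply IsCoprime.symm
    rw [p7.irreducible.coprime_iff_not_dvd]
    intro hd
    have h1 : (7 : ℤ) ∣ 11 * b := by
      have e : 11 * b = m ^ 2 * w - 7 * a := by rw [hW]; ring
      rw [e]; exact dvd_sub (hd.mul_left _) (dvd_mul_right _ _)
    rcases p7.dvd_or_dvd h1 with h2 | h2
    · norm_num at h2
    · exact nb7 h2
  have hhb : IsCoprime h b := by
    apply bs_cop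
    intro q hq h1 h2
    have h3 : (q : ℤ) ∣ a ^ 4 := by
      have e : a ^ 4 = m ^ 2 * h + b * (2 * a ^ 2 * b + a * b ^ 2 - b ^ 3) := by rw [hH]; ring
      rw [e]; exact dvd_add (h1.mul_left _) (h2.mul_right _)
    exact bs_not _ _ q hab hq (hq.dvd_of_dvd_pow h3) h2
  have hgb : IsCoprime g b := by
    apply bs_cop
    intro q hq h1 h2
    have h3 : (q : ℤ) ∣ a ^ 10 := by
      have e : a ^ 10 = m ^ 2 * g + b * (2 * b ^ 9 - 2 * a ^ 2 * b ^ 7) := by rw [hG]; ring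
      rw [e]; exact dvd_add (h1.mul_left _) (h2.mul_right _)
    exact bs_not _ _ q hab hq (hq.dvd_of_dvd_pow h3) h2
  have h2g : IsCoprime 2 g := ⟨-(g / 2), 1, by omega⟩
  have h2b : IsCoprime 2 b := ⟨-(b / 2), 1, by omega⟩
  have hUg : IsCoprime (α * U) g := by
    apply bs_cop
    intro q hq h1 h2
    have nb : ¬ (q : ℤ) ∣ b := fun h3 => bs_not _ _ q hgb hq h2 h3
    have nbp : ∀ k, ¬ (q : ℤ) ∣ b ^ k := fun k h3 => nb (hq.dvd_of_dvd_pow h3)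
    have n2 : ¬ (q : ℤ) ∣ 2 := fun h3 => bs_not _ _ q h2g hq h3 h2
    rcases hq.dvd_or_dvd h1 with h3 | h3
    · have h4 : (q : ℤ) ∣ 2 * b ^ 10 := by
        have e : 2 * b ^ 10 = α * (α * (a ^ 9 + 2 * a * b ^ 8)) - m ^ 2 * g := by
          rw [hG, haα]; ring
        rw [e]; exact dvd_sub (h3.mul_right _) (h2.mul_left _)
      rcases hq.dvd_or_dvd h4 with h5 | h5
      · exact n2 h5
      · exact nbp _ h5
    · have h4 : (q : ℤ) ∣ 2 * b ^ 8 * h := by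
        have e : 2 * b ^ 8 * h = g * (a ^ 2 - b ^ 2) - U * a := by linear_combination R6
        rw [e]; exact dvd_sub (h2.mul_right _) (h3.mul_right _)
      rcases hq.dvd_or_dvd h4 with h5 | h5
      · rcases hq.dvd_or_dvd h5 with h6 | h6
        · exact n2 h6
        · exact nbp _ h6
      · have h6 : (q : ℤ) ∣ b ^ 6 * (a ^ 2 + a * b - b ^ 2) * p := by
          have := dvd_sub h2 (h5.mul_right (a ^ 6 + 2 * a ^ 4 * b ^ 2 + a ^ 3 * b ^ 3
            + 3 * a ^ 2 * b ^ 4 + 4 * a * b ^ 5 + b ^ 6))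
          rwa [sub_eq_of_eq_add R2] at this
        rcases hq.dvd_or_dvd h6 with h7 | h7
        · rcases hq.dvd_or_dvd h7 with h8 | h8
          · exact nbp _ h8
          · have h9 : (q : ℤ) ∣ b ^ 3 * (b - 2 * a) := by
              have e : b ^ 3 * (b - 2 * a) = m ^ 2 * h
                  - (a ^ 2 + a * b - b ^ 2) * (a ^ 2 - a * b) := by rw [hH]; ring
              rw [e]; exact dvd_sub (h5.mul_left _) (h8.mul_right _)
            rcases hq.dvd_or_dvd h9 with h10 | h10
            · exact nbp _ h10
            · have h11 : (q : ℤ) ∣ b ^ 2 := by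
                have e : b ^ 2 = (b - 2 * a) * (-3 * b - 2 * a)
                  - (a ^ 2 + a * b - b ^ 2) * 4 := by ring
                rw [e]; exact dvd_sub (h10.mul_right _) (h8.mul_right _)
              exact nbp _ h11
        · have h8 : (q : ℤ) ∣ b ^ 3 * w := by
            have e : b ^ 3 * w = 8 * h - p * (2 * a ^ 2 - 3 * a * b - b ^ 2) := by
              rw [R3]; ring
            rw [e]; exact dvd_sub (h5.mul_left _) (h7.mul_right _)
          rcases hq.dvd_or_dvd h8 with h9 | h9
          · exact nbp _ h9
          · have h10 : (q : ℤ) ∣ c ^ 2 * b ^ 2 := by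
              have e : c ^ 2 * b ^ 2 = 49 * p - w * (28 * a - 2 * b) := by rw [R4]; ring
              rw [e]; exact dvd_sub (h7.mul_left _) (h9.mul_right _)
            rcases hq.dvd_or_dvd h10 with h11 | h11
            · exact bs_not _ _ q hwc hq h9 (hq.dvd_of_dvd_pow h11)
            · exact nbp _ h11
  have t1 : jacobiSym 21 g.natAbs = -1 := by
    rw [bs_recip 21 g (by norm_num) (by omega) (Or.inl (by norm_num)) (by omega)]
    have e : (21 : ℤ).natAbs = 21 := rfl
    rw [e, hJ]
  have t2 : jacobiSym (21 * v ^ 2 * h) g.natAbs = 1 := by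
    rw [← bs_sq _ _ hUg]
    apply bs_congr
    exact ⟨-b ^ 3 * g, by rw [R1]; ring⟩
  have t3 : jacobiSym h g.natAbs = 1 := by
    have u1 := bs_recip h g (by omega) (by omega) (Or.inr (by omega)) (by
      rintro ⟨k1, k2⟩
      rcases lt_or_gt_of_ne (show b ≠ 0 by omega) with k | k
      · have := hh0 k; omega
      · have := hg0 k; omega)
    have u2 : jacobiSym g h.natAbs =
        jacobiSym ((b ^ 3) ^ 2 * (a ^ 2 + a * b - b ^ 2) * p) h.natAbs := by
      apply bs_congr
      exact ⟨a ^ 6 + 2 * a ^ 4 * b ^ 2 + a ^ 3 * b ^ 3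
        + 3 * a ^ 2 * b ^ 4 + 4 * a * b ^ 5 + b ^ 6, by linear_combination R2⟩
    rw [u1, u2, jacobiSym.mul_left, jacobiSym.mul_left, bs_sq _ _ (hhb.symm.pow_left),
      bs_P1 a b h m ha ha0 hb hab hH hmP hba hh0 hh8,
      bs_P2 a b h m c p w hb hab hP R3 hW R4 hmb hwc hw7 hp0 hp8 hw8 hh8]
    norm_num
  rw [jacobiSym.mul_left, jacobiSym.mul_left, t1, t3, jacobiSym.pow_left] at t2
  nlinarith [sq_nonneg (jacobiSym v g.natAbs)]

lemma bs_one (x : ℤ) : 1 ^ 2 * x = x := by ring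

lemma bs_mod169 : ∀ x : ZMod 169, x ^ 19 = 4 → x = 95 := by
  set_option maxRecDepth 100000 in decide

theorem no_solutions_BS1_p_19 :
    ¬ ∃ α β v : ℤ, Odd α ∧ Odd β ∧ Odd v ∧
      Int.gcd α β = 1 ∧ Int.gcd α v = 1 ∧ Int.gcd β v = 1 ∧
      α ^ 38 - 4 * β ^ 19 = 21 * v ^ 2 := by
  rintro ⟨α, b, v, hα, hb, hv, gαb, gαv, gbv, heq⟩
  rw [← Int.isCoprime_iff_gcd_eq_one] at gαb gαv gbv
  obtain ⟨a, haα⟩ : ∃ a, a = α ^ 2 := ⟨_, rfl⟩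
  have heqa : a ^ 19 - 4 * b ^ 19 = 21 * v ^ 2 := by rw [← heq, haα]; ring
  have hab : IsCoprime a b := by rw [haα]; exact gαb.pow_left
  have hav : IsCoprime a v := by rw [haα]; exact gαv.pow_left
  have hα2 : α % 2 = 1 := Int.odd_iff.mp hα
  have hb2 : b % 2 = 1 := Int.odd_iff.mp hb
  have hv2 : v % 2 = 1 := Int.odd_iff.mp hv
  have ha8 : a % 8 = 1 := by
    have : α % 8 = 1 ∨ α % 8 = 3 ∨ α % 8 = 5 ∨ α % 8 = 7 := by omega
    rcases this with f | f | f | f <;> simp [haα, pow_two, Int.mul_emod, f]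
  have ha0 : 0 < a := by
    have : α ≠ 0 := by omega
    rw [haα]; positivity
  have hba : b < a := by
    by_contra hcon
    have h1 : a ^ 19 ≤ b ^ 19 := pow_le_pow_left₀ ha0.le (not_lt.mp hcon) 19
    have h2 : 0 < a ^ 19 := by positivity
    nlinarith [sq_nonneg v]
  have hl3 : a % 3 = 1 ∧ b % 3 = 1 := by
    have e : ((a : ℤ) : ZMod 3) ^ 19 - 4 * ((b : ℤ) : ZMod 3) ^ 19 = 0 := by
      have := congrArg (Int.cast : ℤ → ZMod 3) heqa
      push_cast at this
      rw [this, show (21 : ZMod 3) = 0 by decide, zero_mul]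
    have e2 : ((a : ℤ) : ZMod 3) = ((α : ℤ) : ZMod 3) ^ 2 := by rw [haα]; push_cast; rfl
    have d : ∀ x z y : ZMod 3, x = z ^ 2 → x ^ 19 - 4 * y ^ 19 = 0 →
        x = 0 ∧ y = 0 ∨ x = 1 ∧ y = 1 := by decide
    rcases d _ _ _ e2 e with ⟨f, k⟩ | ⟨f, k⟩
    · exact (bs_not a b 3 hab (by norm_num) ((ZMod.intCast_zmod_eq_zero_iff_dvd a 3).mp f)
        ((ZMod.intCast_zmod_eq_zero_iff_dvd b 3).mp k)).elim
    · have f2 := (ZMod.intCast_eq_intCast_iff' a 1 3).mp (by simpa using f)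
      have k2 := (ZMod.intCast_eq_intCast_iff' b 1 3).mp (by simpa using k)
      norm_num at f2 k2
      exact ⟨f2, k2⟩
  have hl7 : a % 7 = (4 * b) % 7 ∧ (b % 7 = 1 ∨ b % 7 = 2 ∨ b % 7 = 4) := by
    have e : ((a : ℤ) : ZMod 7) ^ 19 - 4 * ((b : ℤ) : ZMod 7) ^ 19 = 0 := by
      have := congrArg (Int.cast : ℤ → ZMod 7) heqa
      push_cast at this
      rw [this, show (21 : ZMod 7) = 0 by decide, zero_mul]
    have e2 : ((a : ℤ) : ZMod 7) = ((α : ℤ) : ZMod 7) ^ 2 := by rw [haα]; push_cast; rfl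
    have d : ∀ z y : ZMod 7, (z ^ 2) ^ 19 - 4 * y ^ 19 = 0 →
        z ^ 2 = 0 ∧ y = 0 ∨ z ^ 2 = 4 * y ∧ (y = 1 ∨ y = 2 ∨ y = 4) := by decide
    rw [e2] at e
    have d1 := d _ _ e
    rw [← e2] at d1
    rcases d1 with ⟨f, k⟩ | ⟨f, k⟩
    · exact (bs_not a b 7 hab (by norm_num) ((ZMod.intCast_zmod_eq_zero_iff_dvd a 7).mp f)
        ((ZMod.intCast_zmod_eq_zero_iff_dvd b 7).mp k)).elim
    · have f2 := (ZMod.intCast_eq_intCast_iff' a (4 * b) 7).mp (by push_cast; exact f)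
      refine ⟨by exact_mod_cast f2, ?_⟩
      rcases k with k | k | k
      · have k2 := (ZMod.intCast_eq_intCast_iff' b 1 7).mp (by simpa using k)
        left; simpa using k2
      · have k2 := (ZMod.intCast_eq_intCast_iff' b 2 7).mp (by simpa using k)
        right; left; simpa using k2
      · have k2 := (ZMod.intCast_eq_intCast_iff' b 4 7).mp (by simpa using k)
        right; right; simpa using k2
  have p13 : Prime (13 : ℤ) := by norm_num
  by_cases h13 : (13 : ℤ) ∣ v
  · obtain ⟨v', hv'⟩ := h13
    have hb13 : ¬ (13 : ℤ) ∣ b := fun h => bs_not _ _ 13 gbv p13 h ⟨v', hv'⟩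
    have ha13 : ¬ (13 : ℤ) ∣ a := fun h => bs_not _ _ 13 hav p13 h ⟨v', hv'⟩
    have c13b : IsCoprime (13 : ℤ) b := (p13.irreducible.coprime_iff_not_dvd).mpr hb13
    have c13a : IsCoprime (13 : ℤ) a := (p13.irreducible.coprime_iff_not_dvd).mpr ha13
    have hW : (169 : ℤ) ∣ 7 * a + 11 * b := by
      have c169 : IsCoprime (169 : ℤ) b := by
        have := c13b.pow_left (m := 2)
        norm_num at this
        exact this
      obtain ⟨s, t, hst⟩ := c169
      have e1 : (t : ZMod 169) * (b : ZMod 169) = 1 := by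
        have := congrArg (Int.cast : ℤ → ZMod 169) hst
        push_cast at this
        rw [show (169 : ZMod 169) = 0 by decide, mul_zero, zero_add] at this
        exact this
      have e2 : (a : ZMod 169) ^ 19 = 4 * (b : ZMod 169) ^ 19 := by
        have := congrArg (Int.cast : ℤ → ZMod 169) heqa
        rw [hv'] at this
        push_cast at this
        have z : (169 : ZMod 169) = 0 := by decide
        linear_combination this + 21 * (v' : ZMod 169) ^ 2 * z
      have e3 := bs_mod169 ((a : ZMod 169) * (t : ZMod 169)) (by
        rw [mul_pow, e2, mul_assoc, ← mul_pow, mul_comm (b : ZMod 169), e1]; norm_num)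
      have e4 : (a : ZMod 169) = 95 * (b : ZMod 169) := by
        linear_combination (b : ZMod 169) * e3 - (a : ZMod 169) * e1
      apply (ZMod.intCast_zmod_eq_zero_iff_dvd _ 169).mp
      push_cast
      have z : (169 : ZMod 169) = 0 := by decide
      linear_combination 7 * e4 + 4 * (b : ZMod 169) * z
    obtain ⟨w, hw⟩ := hW
    have c7 : IsCoprime (169 : ℤ) 49 := by rw [Int.isCoprime_iff_gcd_eq_one]; norm_num
    have c8 : IsCoprime (169 : ℤ) 8 := by rw [Int.isCoprime_iff_gcd_eq_one]; norm_num
    obtain ⟨p, hp⟩ : (169 : ℤ) ∣ 4 * a ^ 2 + 6 * a * b + 3 * b ^ 2 := by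
      apply c7.dvd_of_dvd_mul_left
      exact ⟨w * (28 * a - 2 * b) + b ^ 2, by linear_combination (28 * a - 2 * b) * hw⟩
    obtain ⟨h, hh⟩ : (169 : ℤ) ∣ (a ^ 2 - b ^ 2) ^ 2 - a * b ^ 3 := by
      apply c8.dvd_of_dvd_mul_left
      exact ⟨p * (2 * a ^ 2 - 3 * a * b - b ^ 2) + b ^ 3 * w, by
        linear_combination (2 * a ^ 2 - 3 * a * b - b ^ 2) * hp + b ^ 3 * hw⟩
    obtain ⟨g, hg⟩ : ∃ g, g = b ^ 6 * (a ^ 2 + a * b - b ^ 2) * p + h * (a ^ 6 + 2 * a ^ 4 * b ^ 2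
      + a ^ 3 * b ^ 3 + 3 * a ^ 2 * b ^ 4 + 4 * a * b ^ 5 + b ^ 6) := ⟨_, rfl⟩
    have hG : a ^ 10 + 2 * a ^ 2 * b ^ 8 - 2 * b ^ 10 = 169 * g := by
      linear_combination (b ^ 6 * (a ^ 2 + a * b - b ^ 2)) * hp + (a ^ 6 + 2 * a ^ 4 * b ^ 2
        + a ^ 3 * b ^ 3 + 3 * a ^ 2 * b ^ 4 + 4 * a * b ^ 5 + b ^ 6) * hh - 169 * hg
    have c169a : IsCoprime (169 : ℤ) a := by
      have := c13a.pow_left (m := 2)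
      norm_num at this
      exact this
    obtain ⟨U, hU⟩ : (169 : ℤ) ∣ a ^ 9 * (a ^ 2 - b ^ 2) + 2 * b ^ 11 := by
      apply c169a.dvd_of_dvd_mul_left
      exact ⟨a ^ 2 * g - b ^ 2 * g - 2 * b ^ 8 * h, by
        linear_combination (a ^ 2 - b ^ 2) * hG - 2 * b ^ 8 * hh⟩
    refine bs_core α a b v' 13 1 h g p w U haα ha8 ha0 hb2 hab (Or.inr rfl) hl3.1 hl3.2 hl7.1 hl7.2
      hba (by rw [hh]; norm_num) (by rw [hG]; norm_num) (by rw [hp]; norm_num)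
      (by rw [hw]; norm_num) ?_ hg ?_ ?_ ?_ c13b ?_ isCoprime_one_right
    · have z : (169 : ℤ) ^ 2 ≠ 0 := by norm_num
      apply mul_left_cancel₀ z
      rw [hv'] at heqa
      have i1 : (a ^ 19 - 4 * b ^ 19) * ((a ^ 2 - b ^ 2) ^ 2 - a * b ^ 3) =
        a * (a ^ 9 * (a ^ 2 - b ^ 2) + 2 * b ^ 11) ^ 2
          - b ^ 3 * (a ^ 10 + 2 * a ^ 2 * b ^ 8 - 2 * b ^ 10) ^ 2 := by ring
      rw [heqa, hh, hU, hG] at i1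
      rw [mul_pow α, ← haα]
      linear_combination i1
    · apply mul_left_cancel₀ (show (169 : ℤ) ≠ 0 by norm_num)
      linear_combination (2 * a ^ 2 - 3 * a * b - b ^ 2) * hp + b ^ 3 * hw - 8 * hh
    · apply mul_left_cancel₀ (show (169 : ℤ) ≠ 0 by norm_num)
      linear_combination (28 * a - 2 * b) * hw - 49 * hp
    · apply mul_left_cancel₀ (show (169 : ℤ) ≠ 0 by norm_num)
      linear_combination (a ^ 2 - b ^ 2) * hG - a * hU - 2 * b ^ 8 * hh
    · rw [p13.irreducible.coprime_iff_not_dvd]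
      intro hd
      have d : ∀ x y : ZMod 13, 7 * x + 11 * y = 0 → x ^ 2 + x * y - y ^ 2 = 0 → x = 0 := by decide
      have f1 := (ZMod.intCast_zmod_eq_zero_iff_dvd _ 13).mpr hd
      have f2 := (ZMod.intCast_zmod_eq_zero_iff_dvd (7 * a + 11 * b) 13).mpr
        ⟨13 * w, by rw [hw]; push_cast; ring⟩
      push_cast at f1 f2
      exact ha13 ((ZMod.intCast_zmod_eq_zero_iff_dvd a 13).mp (d _ _ f2 f1))
  · refine bs_core α a b v 1 13 _ _ _ _ (a ^ 9 * (a ^ 2 - b ^ 2) + 2 * b ^ 11) haα ha8 ha0 hb2 hab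
      (Or.inl rfl) hl3.1 hl3.2 hl7.1 hl7.2
      hba (bs_one _) (bs_one _)
      (bs_one _) (bs_one _)
      ?_ ?_ ?_ ?_ ?_ isCoprime_one_left isCoprime_one_left ?_
    · rw [← heqa, mul_pow α, ← haα]; ring
    · ring
    · ring
    · ring
    · ring
    · apply IsCoprime.symm
      rw [p13.irreducible.coprime_iff_not_dvd]
      intro hd
      have d : ∀ x y : ZMod 13, 7 * x + 11 * y = 0 → x ^ 19 - 4 * y ^ 19 = 0 := by decide
      have d2 : ∀ x : ZMod 13, 21 * x ^ 2 = 0 → x = 0 := by decide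
      have f1 := (ZMod.intCast_zmod_eq_zero_iff_dvd _ 13).mpr hd
      push_cast at f1
      have f2 := d _ _ f1
      have := congrArg (Int.cast : ℤ → ZMod 13) heqa
      push_cast at this
      rw [this] at f2
      exact h13 ((ZMod.intCast_zmod_eq_zero_iff_dvd v 13).mp (d2 _ f2))
end
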